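/- arXiv:1404.4485 — 2 statements merged into one kernel-verified Lean document; each statement's English description precedes it below -/
import Mathlib

section
/- The pushforward map μ ↦ T♯μ is a bijection from the set of Borel probability measures on ℝ² onto the set of Borel probability measures μ̃ on the sphere S with μ̃({N}) = 0, and it is a homeomorphism for the topologies of weak convergence: for probability measures μₙ, μ on ℝ², μₙ → μ weakly if and only if T♯μₙ → T♯μ weakly. -/
open Real Filter MeasureTheory

/-- The inverse stereographic projection onto the sphere of radius `1/2`
centered at `(0,0,1/2)`. -/
noncomputable def stereoT (x : EuclideanSpace ℝ (Fin 2)) : EuclideanSpace ℝ (Fin 3) :=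
  (WithLp.equiv 2 (Fin 3 → ℝ)).symm
    ![x 0 / (1 + ‖x‖^2), x 1 / (1 + ‖x‖^2), ‖x‖^2 / (1 + ‖x‖^2)]

/-- The north pole `N = (0,0,1)`. -/
noncomputable def northPole : EuclideanSpace ℝ (Fin 3) :=
  (WithLp.equiv 2 (Fin 3 → ℝ)).symm ![0, 0, 1]

/-- The center `(0,0,1/2)` of the sphere `S`. -/
noncomputable def sphereCenter : EuclideanSpace ℝ (Fin 3) :=
  (WithLp.equiv 2 (Fin 3 → ℝ)).symm ![0, 0, 1/2]

/-- The stereographic projection, a left inverse of `stereoT`. -/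
noncomputable def stereoR (y : EuclideanSpace ℝ (Fin 3)) : EuclideanSpace ℝ (Fin 2) :=
  (WithLp.equiv 2 (Fin 2 → ℝ)).symm ![y 0 / (1 - y 2), y 1 / (1 - y 2)]

lemma nsq (x : EuclideanSpace ℝ (Fin 2)) : ‖x‖ ^ 2 = x 0 ^ 2 + x 1 ^ 2 := by
  rw [EuclideanSpace.real_norm_sq_eq, Fin.sum_univ_two]

lemma stereoT_zero (x : EuclideanSpace ℝ (Fin 2)) : stereoT x 0 = x 0 / (1 + ‖x‖^2) := rfl
lemma stereoT_one (x : EuclideanSpace ℝ (Fin 2)) : stereoT x 1 = x 1 / (1 + ‖x‖^2) := rfl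
lemma stereoT_two (x : EuclideanSpace ℝ (Fin 2)) : stereoT x 2 = ‖x‖^2 / (1 + ‖x‖^2) := rfl
lemma stereoR_zero (y : EuclideanSpace ℝ (Fin 3)) : stereoR y 0 = y 0 / (1 - y 2) := rfl
lemma stereoR_one (y : EuclideanSpace ℝ (Fin 3)) : stereoR y 1 = y 1 / (1 - y 2) := rfl

lemma one_sub_two (x : EuclideanSpace ℝ (Fin 2)) : 1 - stereoT x 2 = 1 / (1 + ‖x‖^2) := by
  rw [stereoT_two]
  have : 1 + ‖x‖^2 ≠ 0 := by positivity
  field_simp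
  ring

lemma two_ne_one (x : EuclideanSpace ℝ (Fin 2)) : stereoT x 2 ≠ 1 := by
  intro h
  have h1 := one_sub_two x
  rw [h, sub_self] at h1
  have : (0:ℝ) < 1 / (1 + ‖x‖^2) := by positivity
  linarith

lemma stereoR_T (x : EuclideanSpace ℝ (Fin 2)) : stereoR (stereoT x) = x := by
  have h : 1 + ‖x‖^2 ≠ 0 := by positivity
  ext i
  fin_cases i
  · change stereoR (stereoT x) 0 = x 0
    rw [stereoR_zero, one_sub_two, stereoT_zero]
    field_simp
  · change stereoR (stereoT x) 1 = x 1
    rw [stereoR_one, one_sub_two, stereoT_one]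
    field_simp

lemma mem_sph (y : EuclideanSpace ℝ (Fin 3)) :
    y ∈ Metric.sphere sphereCenter (1/2) ↔ y 0 ^ 2 + y 1 ^ 2 = y 2 * (1 - y 2) := by
  rw [mem_sphere_iff_norm, ← sq_eq_sq₀ (norm_nonneg _) (by norm_num),
    EuclideanSpace.real_norm_sq_eq, Fin.sum_univ_three]
  have h0 : (y - sphereCenter) 0 = y 0 - 0 := rfl
  have h1 : (y - sphereCenter) 1 = y 1 - 0 := rfl
  have h2 : (y - sphereCenter) 2 = y 2 - 1/2 := rfl
  rw [h0, h1, h2]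
  constructor <;> intro h <;> nlinarith

lemma stereoT_mem (x : EuclideanSpace ℝ (Fin 2)) :
    stereoT x ∈ Metric.sphere sphereCenter (1/2) := by
  have h : 1 + ‖x‖^2 ≠ 0 := by positivity
  rw [mem_sph, one_sub_two, stereoT_zero, stereoT_one, stereoT_two]
  field_simp
  rw [nsq]

lemma eq_north (y : EuclideanSpace ℝ (Fin 3)) (hy : y ∈ Metric.sphere sphereCenter (1/2))
    (h : y 2 = 1) : y = northPole := by
  rw [mem_sph, h] at hy
  have h0 : y 0 = 0 := by nlinarith [sq_nonneg (y 0), sq_nonneg (y 1)]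
  have h1 : y 1 = 0 := by nlinarith [sq_nonneg (y 0), sq_nonneg (y 1)]
  ext i
  fin_cases i
  · exact h0
  · exact h1
  · exact h

lemma stereoT_R (y : EuclideanSpace ℝ (Fin 3)) (hy : y ∈ Metric.sphere sphereCenter (1/2))
    (h : y ≠ northPole) : stereoT (stereoR y) = y := by
  have h2 : y 2 ≠ 1 := fun h' => h (eq_north y hy h')
  have h3 : 1 - y 2 ≠ 0 := fun h' => h2 (by linarith)
  rw [mem_sph] at hy
  have hn : ‖stereoR y‖ ^ 2 = y 2 / (1 - y 2) := by
    rw [nsq, stereoR_zero, stereoR_one, div_pow, div_pow, ← add_div, hy]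
    field_simp
  have hn1 : 1 + ‖stereoR y‖ ^ 2 = 1 / (1 - y 2) := by
    rw [hn]
    field_simp
    ring
  ext i
  fin_cases i
  · change stereoT (stereoR y) 0 = y 0
    rw [stereoT_zero, hn1, stereoR_zero]
    field_simp
  · change stereoT (stereoR y) 1 = y 1
    rw [stereoT_one, hn1, stereoR_one]
    field_simp
  · change stereoT (stereoR y) 2 = y 2
    rw [stereoT_two, hn1, hn]
    field_simp

lemma continuous_stereoT : Continuous stereoT := by
  have h (x : EuclideanSpace ℝ (Fin 2)) : 1 + ‖x‖^2 ≠ 0 := by positivity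
  refine (PiLp.continuous_toLp 2 (fun _ : Fin 3 => ℝ)).comp ?_
  refine continuous_pi fun i => ?_
  fin_cases i
  · exact Continuous.div (by fun_prop) (by fun_prop) h
  · exact Continuous.div (by fun_prop) (by fun_prop) h
  · exact Continuous.div (by fun_prop) (by fun_prop) h

lemma measurable_stereoR : Measurable stereoR := by
  refine (PiLp.continuous_toLp 2 (fun _ : Fin 2 => ℝ)).measurable.comp ?_
  refine measurable_pi_lambda _ fun i => ?_
  fin_cases i
  · exact Measurable.div (by fun_prop) (by fun_prop)
  · exact Measurable.div (by fun_prop) (by fun_prop)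

lemma continuousOn_stereoR : ContinuousOn stereoR {y | y 2 ≠ 1} := by
  have h : ∀ y ∈ {y : EuclideanSpace ℝ (Fin 3) | y 2 ≠ 1}, 1 - y 2 ≠ 0 :=
    fun y hy h' => hy (by linarith)
  refine (PiLp.continuous_toLp 2 (fun _ : Fin 2 => ℝ)).comp_continuousOn ?_
  refine continuousOn_pi.2 fun i => ?_
  fin_cases i
  · exact ContinuousOn.div (by fun_prop) (by fun_prop) h
  · exact ContinuousOn.div (by fun_prop) (by fun_prop) h

lemma exists_open (G : Set (EuclideanSpace ℝ (Fin 2))) (hG : IsOpen G) :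
    ∃ V : Set (EuclideanSpace ℝ (Fin 3)), IsOpen V ∧ stereoT ⁻¹' V = G := by
  refine ⟨{y | y 2 ≠ 1} ∩ stereoR ⁻¹' G, continuousOn_stereoR.isOpen_inter_preimage ?_ hG, ?_⟩
  · exact isOpen_ne_fun (by fun_prop) continuous_const
  · ext x
    simp [stereoR_T, two_ne_one]

/-- The pushforward by `T` is a bijection from probability measures on `ℝ²` onto probability
measures on the sphere `S` giving no mass to `{N}`, and is a homeomorphism for the weak
topologies. -/
theorem pushforward_stereoT_homeo :
    (∀ μ : Measure (EuclideanSpace ℝ (Fin 2)), IsProbabilityMeasure μ →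
      IsProbabilityMeasure (μ.map stereoT) ∧
      (μ.map stereoT) (Metric.sphere sphereCenter (1/2)) = 1 ∧
      (μ.map stereoT) {northPole} = 0) ∧
    (∀ μ₁ μ₂ : Measure (EuclideanSpace ℝ (Fin 2)),
      IsProbabilityMeasure μ₁ → IsProbabilityMeasure μ₂ →
      μ₁.map stereoT = μ₂.map stereoT → μ₁ = μ₂) ∧
    (∀ ν : Measure (EuclideanSpace ℝ (Fin 3)), IsProbabilityMeasure ν →
      ν (Metric.sphere sphereCenter (1/2)) = 1 → ν {northPole} = 0 →
      ∃ μ : Measure (EuclideanSpace ℝ (Fin 2)),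
        IsProbabilityMeasure μ ∧ μ.map stereoT = ν) ∧
    (∀ (μseq : ℕ → Measure (EuclideanSpace ℝ (Fin 2)))
       (μ₀ : Measure (EuclideanSpace ℝ (Fin 2))),
      (∀ n, IsProbabilityMeasure (μseq n)) → IsProbabilityMeasure μ₀ →
      ((∀ f : BoundedContinuousFunction (EuclideanSpace ℝ (Fin 2)) ℝ,
          Tendsto (fun n => ∫ a, f a ∂(μseq n)) atTop (nhds (∫ a, f a ∂μ₀))) ↔
       (∀ g : BoundedContinuousFunction (EuclideanSpace ℝ (Fin 3)) ℝ,
          Tendsto (fun n => ∫ a, g a ∂((μseq n).map stereoT)) atTop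
            (nhds (∫ a, g a ∂(μ₀.map stereoT)))))) := by
  have hT := continuous_stereoT.measurable
  have hR := measurable_stereoR
  refine ⟨fun μ hμ => ⟨Measure.isProbabilityMeasure_map hT.aemeasurable, ?_, ?_⟩, ?_, ?_, ?_⟩
  · rw [Measure.map_apply hT Metric.isClosed_sphere.measurableSet]
    have : stereoT ⁻¹' Metric.sphere sphereCenter (1/2) = Set.univ :=
      Set.eq_univ_of_forall stereoT_mem
    rw [this, measure_univ]
  · rw [Measure.map_apply hT (measurableSet_singleton _)]
    have : stereoT ⁻¹' {northPole} = ∅ := by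
      refine Set.eq_empty_of_forall_notMem fun x hx => two_ne_one x ?_
      rw [Set.mem_singleton_iff.1 hx]
      rfl
    rw [this, measure_empty]
  · intro μ₁ μ₂ _ _ h
    have key : ∀ μ : Measure (EuclideanSpace ℝ (Fin 2)), (μ.map stereoT).map stereoR = μ := by
      intro μ
      rw [Measure.map_map hR hT, show stereoR ∘ stereoT = id from funext stereoR_T,
        Measure.map_id]
    rw [← key μ₁, h, key]
  · intro ν _ h1 h2
    refine ⟨ν.map stereoR, Measure.isProbabilityMeasure_map hR.aemeasurable, ?_⟩
    rw [Measure.map_map hT hR]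
    have hS : ∀ᵐ y ∂ν, y ∈ Metric.sphere sphereCenter (1/2) :=
      (mem_ae_iff_prob_eq_one Metric.isClosed_sphere.measurableSet).2 h1
    have hN : ∀ᵐ y ∂ν, y ≠ northPole := by
      rw [ae_iff]
      simpa using h2
    have : stereoT ∘ stereoR =ᵐ[ν] id := by
      filter_upwards [hS, hN] with y hy hy'
      exact stereoT_R y hy hy'
    rw [Measure.map_congr this, Measure.map_id]
  · intro μs μ₀ hμs hμ₀
    have hi : ∀ (μ : Measure (EuclideanSpace ℝ (Fin 2)))
        (g : BoundedContinuousFunction (EuclideanSpace ℝ (Fin 3)) ℝ),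
        ∫ a, g a ∂(μ.map stereoT) = ∫ a, g (stereoT a) ∂μ := fun μ g =>
      integral_map hT.aemeasurable g.continuous.aestronglyMeasurable
    constructor
    · intro h g
      simp only [hi]
      exact h (g.compContinuous ⟨stereoT, continuous_stereoT⟩)
    · intro h
      let P : ℕ → ProbabilityMeasure (EuclideanSpace ℝ (Fin 2)) := fun n => ⟨μs n, hμs n⟩
      let P₀ : ProbabilityMeasure (EuclideanSpace ℝ (Fin 2)) := ⟨μ₀, hμ₀⟩
      let Q : ℕ → ProbabilityMeasure (EuclideanSpace ℝ (Fin 3)) := fun n =>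
        ⟨(μs n).map stereoT, Measure.isProbabilityMeasure_map hT.aemeasurable⟩
      let Q₀ : ProbabilityMeasure (EuclideanSpace ℝ (Fin 3)) :=
        ⟨μ₀.map stereoT, Measure.isProbabilityMeasure_map hT.aemeasurable⟩
      have hQ : Tendsto Q atTop (nhds Q₀) :=
        ProbabilityMeasure.tendsto_iff_forall_integral_tendsto.2 h
      have hP : Tendsto P atTop (nhds P₀) := by
        refine tendsto_of_forall_isOpen_le_liminf_nat' fun G hG => ?_
        obtain ⟨V, hV, rfl⟩ := exists_open G hG
        have := ProbabilityMeasure.le_liminf_measure_open_of_tendsto hQ hV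
        have e : ∀ μ : Measure (EuclideanSpace ℝ (Fin 2)),
            (μ.map stereoT) V = μ (stereoT ⁻¹' V) := fun μ =>
          Measure.map_apply hT hV.measurableSet
        change (μ₀.map stereoT) V ≤ liminf (fun n => ((μs n).map stereoT) V) atTop at this
        simp only [e] at this
        exact this
      exact ProbabilityMeasure.tendsto_iff_forall_integral_tendsto.1 hP
end

section
/- Let c > 0. There exists a constant C depending only on c such that the following holds for every n ≥ 2: if y₁,…,yₙ are points of the unit sphere 𝕊² ⊂ ℝ³ satisfying ‖yᵢ − yⱼ‖ > c/√n for all i ≠ j and ‖yᵢ − N‖ > c/√n for all i, where N = (0,0,1), then (i) for every r > 0, #{i : ‖yᵢ − N‖ ≤ r} ≤ C·r²·n, and (ii) for every δ ∈ (0, 1/2], ∑_{i : ‖yᵢ−N‖ ≤ δ} (−log‖yᵢ − N‖) ≤ C·n·δ²·(1 + |log δ|). -/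
open Real


/-- The north pole `N = (0,0,1)` of the unit sphere `𝕊² ⊂ ℝ³`. -/
noncomputable def northPoleUnit : EuclideanSpace ℝ (Fin 3) :=
  (WithLp.equiv 2 (Fin 3 → ℝ)).symm ![0, 0, 1]


lemma np_dist_sq (v w : EuclideanSpace ℝ (Fin 3)) :
    dist v w ^ 2 = (v 0 - w 0)^2 + (v 1 - w 1)^2 + (v 2 - w 2)^2 := by
  rw [EuclideanSpace.dist_eq, Real.sq_sqrt (by positivity)]
  simp [Fin.sum_univ_three, Real.dist_eq, sq_abs]

lemma np_norm_sq (v : EuclideanSpace ℝ (Fin 3)) (hv : ‖v‖ = 1) :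
    (v 0)^2 + (v 1)^2 + (v 2)^2 = 1 := by
  have h := EuclideanSpace.norm_sq_eq v
  rw [hv] at h
  simp [Fin.sum_univ_three, sq_abs] at h
  linarith

lemma np_dist_pole (v : EuclideanSpace ℝ (Fin 3)) :
    dist v northPoleUnit ^ 2 = (v 0)^2 + (v 1)^2 + (v 2 - 1)^2 := by
  rw [np_dist_sq]
  simp [northPoleUnit]

/-- Two points of the unit sphere near the north pole in the same grid cell are close. -/
lemma np_cell {a b p x y z h : ℝ} (h1 : a^2+b^2+p^2 = 1) (h2 : x^2+y^2+z^2=1)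
    (hp : 1/2 ≤ p) (hz : 1/2 ≤ z) (hx : (a-x)^2 ≤ h^2) (hy : (b-y)^2 ≤ h^2) :
    (a-x)^2+(b-y)^2+(p-z)^2 ≤ 16*h^2 := by
  have e : (p-z)*(p+z) = -((a-x)*(a+x)+(b-y)*(b+y)) := by linear_combination h1 - h2
  have cs : ((a-x)*(a+x)+(b-y)*(b+y))^2 ≤ ((a-x)^2+(b-y)^2)*((a+x)^2+(b+y)^2) := by
    nlinarith [sq_nonneg ((a-x)*(b+y)-(b-y)*(a+x))]
  have s3 : (a+x)^2+(b+y)^2 ≤ 3 := by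
    have p2 : 1/4 ≤ p^2 := by nlinarith
    have z2 : 1/4 ≤ z^2 := by nlinarith
    nlinarith [sq_nonneg (a-x), sq_nonneg (b-y)]
  have s4 : ((a-x)^2+(b-y)^2)*((a+x)^2+(b+y)^2) ≤ (2*h^2)*3 :=
    mul_le_mul (by linarith) s3 (by positivity) (by positivity)
  have s5 : (p-z)^2 * 1 ≤ (p-z)^2*(p+z)^2 :=
    mul_le_mul_of_nonneg_left (one_le_pow₀ (by linarith)) (sq_nonneg _)
  have s6 : (p-z)^2*(p+z)^2 = ((a-x)*(a+x)+(b-y)*(b+y))^2 := by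
    rw [← mul_pow, e]; ring
  have s7 := sq_nonneg h
  linarith

lemma np_floor {a x h : ℝ} (hh : 0 < h) (e : ⌊a/h⌋ = ⌊x/h⌋) : (a-x)^2 ≤ h^2 := by
  have := Int.abs_sub_lt_one_of_floor_eq_floor e
  rw [← sub_div, abs_div, abs_of_pos hh, div_lt_one hh] at this
  exact sq_le_sq' (by linarith [(abs_lt.1 this).1]) (abs_lt.1 this).2.le

lemma np_floor_mem {a r h : ℝ} (hh : 0 < h) (hr : 0 < r) (ha : a^2 ≤ r^2) :
    ⌊a/h⌋ ∈ Finset.Icc (-(⌈r/h⌉₊:ℤ)) (⌈r/h⌉₊:ℤ) := by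
  have hab := abs_le_of_sq_le_sq' ha hr.le
  have hc := Nat.le_ceil (r/h)
  have h1 : a/h ≤ r/h := by gcongr; exact hab.2
  have h2 : -(r/h) ≤ a/h := by rw [← neg_div]; gcongr; exact hab.1
  rw [Finset.mem_Icc]
  constructor
  · apply Int.le_floor.2
    push_cast
    linarith
  · have := Int.floor_le (a/h)
    have : ((⌊a/h⌋:ℤ):ℝ) ≤ ((⌈r/h⌉₊:ℤ):ℝ) := by push_cast; linarith
    exact_mod_cast this

lemma np_count (c : ℝ) (hc : 0 < c) (n : ℕ) (hn : 2 ≤ n) (y : Fin n → EuclideanSpace ℝ (Fin 3))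
    (h1 : ∀ i, ‖y i‖ = 1)
    (h2 : ∀ i j, i ≠ j → dist (y i) (y j) > c / Real.sqrt n)
    (h3 : ∀ i, dist (y i) northPoleUnit > c / Real.sqrt n) (r : ℝ) (hr : 0 < r) :
    ((Finset.univ.filter fun i => dist (y i) northPoleUnit ≤ r).card : ℝ)
          ≤ (1 + 144/c^2) * r^2 * n := by
  have hn0 : (0:ℝ) < n := by exact_mod_cast (by omega : 0 < n)
  have hs : 0 < c / Real.sqrt n := by positivity
  have hs2 : (c / Real.sqrt n)^2 = c^2/n := by rw [div_pow, Real.sq_sqrt hn0.le]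
  set s := c / Real.sqrt n with hsd
  set A := Finset.univ.filter fun i => dist (y i) northPoleUnit ≤ r with hA
  have hq : 0 < 144/c^2 := by positivity
  rcases le_or_gt 1 r with hr1 | hr1
  · have : (A.card:ℝ) ≤ n := by
      have := Finset.card_le_univ A
      rw [Fintype.card_fin] at this
      exact_mod_cast this
    have hr2 : 1 ≤ r^2 := by nlinarith
    have : 1 * (n:ℝ) ≤ (1 + 144/c^2) * r^2 * n := by gcongr; nlinarith
    linarith
  rcases le_or_gt r s with hrs | hrs
  · have : A = ∅ := by
      apply Finset.filter_eq_empty_iff.2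
      intro i _
      have := h3 i
      linarith
    rw [this]; simp; positivity
  set h := s/4 with hh
  have hh0 : 0 < h := by positivity
  set K := ⌈r/h⌉₊ with hK
  have hb : ∀ i ∈ A, (y i 0)^2 ≤ r^2 ∧ (y i 1)^2 ≤ r^2 ∧ 1/2 ≤ y i 2 := by
    intro i hi
    have hd := (Finset.mem_filter.1 hi).2
    have e := np_dist_pole (y i)
    have : dist (y i) northPoleUnit ^ 2 ≤ r^2 := by gcongr
    have e2 := np_norm_sq _ (h1 i)
    refine ⟨?_, ?_, ?_⟩ <;> nlinarith [sq_nonneg (y i 0), sq_nonneg (y i 1), sq_nonneg (y i 2 - 1)]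
  have hcard : A.card ≤ (Finset.Icc (-(K:ℤ)) K ×ˢ Finset.Icc (-(K:ℤ)) K).card := by
    apply Finset.card_le_card_of_injOn (fun i => (⌊y i 0 / h⌋, ⌊y i 1 / h⌋))
    · intro i hi
      have := hb i hi
      simp only [Finset.coe_product, Set.mem_prod, Finset.mem_coe]
      exact ⟨np_floor_mem hh0 hr this.1, np_floor_mem hh0 hr this.2.1⟩
    · intro i hi j hj hij
      simp only [Prod.mk.injEq] at hij
      by_contra hne
      have hd := h2 i j hne
      have := np_cell (np_norm_sq _ (h1 i)) (np_norm_sq _ (h1 j)) (hb i hi).2.2 (hb j hj).2.2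
        (np_floor hh0 hij.1) (np_floor hh0 hij.2)
      rw [← np_dist_sq] at this
      have : s^2 < dist (y i) (y j)^2 := by gcongr
      have : 16 * h^2 = s^2 := by rw [hh]; ring
      linarith
  have hcard2 : A.card ≤ (2*K+1)^2 := by
    refine hcard.trans_eq ?_
    rw [Finset.card_product, Int.card_Icc, sq]
    congr 1 <;> omega
  have hK1 : (K:ℝ) < r/h + 1 := Nat.ceil_lt_add_one (by positivity)
  have hrh : 4 ≤ r/h := by rw [le_div_iff₀ hh0, hh]; linarith
  have : (A.card:ℝ) ≤ (2*K+1)^2 := by exact_mod_cast hcard2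
  have h4 : (2*(K:ℝ)+1)^2 ≤ (3*(r/h))^2 := by gcongr; linarith
  have h5 : (3*(r/h))^2 = 144/c^2 * r^2 * n := by
    have : (3*(r/h))^2 = 144 * r^2 / s^2 := by rw [hh]; field_simp; norm_num
    rw [this, hs2]; field_simp
  have : 0 < r^2*n := by positivity
  nlinarith

lemma np_log (δ d : ℝ) (hδ : 0 < δ) (hd : 0 < d) (hdd : d ≤ δ) (M : ℕ) (hM : δ / 2^M ≤ d) :
    Real.log (δ/d) ≤ ∑ k ∈ Finset.range M, if d ≤ δ/2^k then (1:ℝ) else 0 := by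
  induction M with
  | zero =>
    have : d = δ := le_antisymm hdd (by simpa using hM)
    simp [this, hδ.ne']
  | succ M ih =>
    rcases le_or_gt (δ/2^M) d with h | h
    · rw [Finset.sum_range_succ]
      have : (0:ℝ) ≤ if d ≤ δ/2^M then (1:ℝ) else 0 := by split_ifs <;> norm_num
      linarith [ih h]
    · have e : ∑ k ∈ Finset.range (M+1), (if d ≤ δ/2^k then (1:ℝ) else 0) = (M+1:ℕ) := by
        rw [Finset.sum_congr rfl (g := fun _ => (1:ℝ))]
        · simp
        · intro k hk
          have hk' : k ≤ M := by have := Finset.mem_range.1 hk; omega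
          have : δ/2^M ≤ δ/2^k := by gcongr; norm_num
          rw [if_pos (by linarith)]
      rw [e]
      have : δ/d ≤ 2^(M+1) := by
        rw [div_le_iff₀ (by positivity)] at hM ⊢; linarith
      have h2 := Real.log_le_log (by positivity) this
      rw [Real.log_pow] at h2
      have : Real.log 2 ≤ 1 := by linarith [Real.log_two_lt_d9]
      have : ((M+1:ℕ):ℝ) * Real.log 2 ≤ ((M+1:ℕ):ℝ) * 1 := by gcongr
      linarith


/-- For well-separated points on the unit sphere which also stay at distance `> c/√n` from
the north pole `N`: (i) at most `C r² n` points lie within distance `r` of `N`, and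
(ii) `∑_{‖yᵢ−N‖ ≤ δ} (−log ‖yᵢ−N‖) ≤ C n δ² (1 + |log δ|)` for `δ ∈ (0, 1/2]`. -/
theorem separation_counting (c : ℝ) (hc : 0 < c) :
    ∃ C : ℝ, ∀ n : ℕ, 2 ≤ n → ∀ y : Fin n → EuclideanSpace ℝ (Fin 3),
      (∀ i, ‖y i‖ = 1) →
      (∀ i j, i ≠ j → dist (y i) (y j) > c / Real.sqrt n) →
      (∀ i, dist (y i) northPoleUnit > c / Real.sqrt n) →
      (∀ r : ℝ, 0 < r →
        ((Finset.univ.filter fun i => dist (y i) northPoleUnit ≤ r).card : ℝ)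
          ≤ C * r^2 * n) ∧
      (∀ δ : ℝ, 0 < δ → δ ≤ 1/2 →
        ∑ i ∈ Finset.univ.filter fun i => dist (y i) northPoleUnit ≤ δ,
            (-Real.log (dist (y i) northPoleUnit))
          ≤ C * n * δ^2 * (1 + |Real.log δ|)) := by
  refine ⟨3 * (1 + 144/c^2), fun n hn y h1 h2 h3 => ?_⟩
  have hcount := np_count c hc n hn y h1 h2 h3
  set B := 1 + 144/c^2 with hB
  have hB0 : 0 < B := by positivity
  have hn0 : (0:ℝ) < n := by exact_mod_cast (by omega : 0 < n)
  have hs : 0 < c / Real.sqrt n := by positivity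
  refine ⟨fun r hr => (hcount r hr).trans ?_, fun δ hδ hδ2 => ?_⟩
  · have : 0 < r^2*n := by positivity
    nlinarith [mul_pos hB0 this]
  have hd : ∀ i, 0 < dist (y i) northPoleUnit := fun i => hs.trans (h3 i)
  obtain ⟨M, hM⟩ := pow_unbounded_of_one_lt (δ / (c / Real.sqrt n)) (one_lt_two (α := ℝ))
  have hM' : δ / 2^M ≤ c / Real.sqrt n := by
    rw [div_lt_iff₀ hs] at hM
    rw [div_le_iff₀ (by positivity)]; linarith
  set A := Finset.univ.filter fun i => dist (y i) northPoleUnit ≤ δ with hA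
  have hlog : |Real.log δ| = -Real.log δ := abs_of_neg (Real.log_neg hδ (by linarith))
  have step1 : ∀ i ∈ A, -Real.log (dist (y i) northPoleUnit) ≤ |Real.log δ| +
      ∑ k ∈ Finset.range M, if dist (y i) northPoleUnit ≤ δ/2^k then (1:ℝ) else 0 := by
    intro i hi
    have := np_log δ _ hδ (hd i) (Finset.mem_filter.1 hi).2 M (hM'.trans (h3 i).le)
    rw [Real.log_div hδ.ne' (hd i).ne'] at this
    linarith
  have step2 : ∑ k ∈ Finset.range M, ∑ i ∈ A,
      (if dist (y i) northPoleUnit ≤ δ/2^k then (1:ℝ) else 0) ≤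
      ∑ k ∈ Finset.range M, (B * δ^2 * n) * (1/4:ℝ)^k := by
    apply Finset.sum_le_sum
    intro k _
    calc ∑ i ∈ A, (if dist (y i) northPoleUnit ≤ δ/2^k then (1:ℝ) else 0)
        ≤ ∑ i, (if dist (y i) northPoleUnit ≤ δ/2^k then (1:ℝ) else 0) := by
          apply Finset.sum_le_sum_of_subset_of_nonneg (Finset.subset_univ _)
          intro i _ _
          split_ifs <;> norm_num
      _ = ((Finset.univ.filter fun i => dist (y i) northPoleUnit ≤ δ/2^k).card : ℝ) := by
          rw [Finset.sum_boole]
      _ ≤ B * (δ/2^k)^2 * n := hcount _ (by positivity)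
      _ = _ := by
          rw [div_pow, ← pow_mul, mul_comm k 2, pow_mul, one_div, inv_pow]
          norm_num
          ring
  have step3 : ∑ k ∈ Finset.range M, (1/4:ℝ)^k ≤ 2 := by
    rw [geom_sum_eq (by norm_num)]
    have : (0:ℝ) < (1/4)^M := by positivity
    rw [div_le_iff_of_neg (by norm_num)]
    linarith
  have hX : 0 < B * δ^2 * n := by positivity
  have hL := abs_nonneg (Real.log δ)
  calc _ ≤ ∑ i ∈ A, (|Real.log δ| +
      ∑ k ∈ Finset.range M, if dist (y i) northPoleUnit ≤ δ/2^k then (1:ℝ) else 0) :=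
        Finset.sum_le_sum step1
    _ = A.card * |Real.log δ| + ∑ k ∈ Finset.range M, ∑ i ∈ A,
      (if dist (y i) northPoleUnit ≤ δ/2^k then (1:ℝ) else 0) := by
        rw [Finset.sum_add_distrib, Finset.sum_comm]; simp
    _ ≤ (B * δ^2 * n) * |Real.log δ| + (B * δ^2 * n) * 2 := by
        apply add_le_add
        · exact mul_le_mul_of_nonneg_right (hcount δ hδ) hL
        · refine step2.trans ?_
          rw [← Finset.mul_sum]
          exact mul_le_mul_of_nonneg_left step3 hX.le
    _ ≤ _ := by nlinarith [mul_nonneg hX.le hL]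
end
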